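/- Suppose Ω is an Abelian domain in the sense that the derivative of its Schwarz function extends meromorphically to Ω: there are finitely many distinct points a_1, …, a_n ∈ Ω, an open neighborhood V of Γ, a holomorphic function S on V with S(z) = conj(z) on Γ, and a holomorphic function s on (Ω \ {a_1, …, a_n}) ∪ V with s = S' on V. Then for every function f holomorphic on an open set containing closure(Ω) and every ε > 0 small enough that the closed disks of radius ε around the a_j are pairwise disjoint and contained in Ω \ V: (1/π) ∫_Ω f' dA = −Σ_{j=1}^n (1/(2πi)) ∮_{|z−a_j|=ε} f(z)·s(z) dz, where ∮_{|z−a_j|=ε} denotes the integral over the positively oriented circle of radius ε centered at a_j. -/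

import Mathlib

open Complex MeasureTheory Filter Topology Bornology

/-!
On `∂Ω` one has `f' z̄ + f s = f' S + f S' = (f S)'`. Multiplying `f s` by a cutoff factor that
vanishes near the points `a j` gives a smooth function `Q`, and `u = f' z̄ + Q` still has boundary
values `(f S)'`. In place of Stokes' theorem, `∫_Ω ∂̄u = 0` follows from the fact that a Lipschitz
function vanishing on `∂Ω` remains Lipschitz when extended by zero outside `Ω`, so that its first
derivatives integrate to zero over `Ω`. Since `∂̄u = f' + ∂̄Q` in `Ω`, and the integral of
`∂̄Q` over the disc around `a j` is, in polar coordinates, `1 / (2i)` times the circle integral of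
`f s`, the quadrature identity results.
-/

section NullSets

variable {E F : Type*} [NormedAddCommGroup E] [NormedSpace ℝ E] [FiniteDimensional ℝ E]
  [NormedAddCommGroup F] [NormedSpace ℝ F]

theorem exists_comp_add_id_det_eq_zero {L : E →L[ℝ] F} (hL : L ≠ 0) :
    ∃ A : F →L[ℝ] E, (ContinuousLinearMap.id ℝ E + A ∘L L).det = 0 := by
  obtain ⟨v, hv⟩ := DFunLike.ne_iff.1 hL
  obtain ⟨ℓ, hℓ⟩ := SeparatingDual.exists_eq_one (R := ℝ) hv
  refine ⟨-ℓ.smulRight v, LinearMap.det_eq_zero_iff_ker_ne_bot.2 ?_⟩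
  refine (Submodule.ne_bot_iff _).2 ⟨v, ?_, fun h => hv (by simp [h])⟩
  simp [hℓ]

variable [MeasurableSpace E] [BorelSpace E] (μ : Measure E) [μ.IsAddHaarMeasure]

/- At each point of `s` the identity agrees on `s` with `id + A ∘ h`, whose derivative can be made
singular by the choice of the linear map `A`; hence `s = id '' s` is null by Sard's lemma. -/
theorem measure_eq_zero_of_hasFDerivWithinAt_ne_zero {s : Set E} {h : E → F} {h' : E → E →L[ℝ] F}
    (hh' : ∀ x ∈ s, HasFDerivWithinAt h (h' x) s x) (hzero : ∀ x ∈ s, h x = 0)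
    (hne : ∀ x ∈ s, h' x ≠ 0) : μ s = 0 := by
  choose! A hA using fun x hx => exists_comp_add_id_det_eq_zero (hne x hx)
  rw [← Set.image_id s]
  refine addHaar_image_eq_zero_of_det_fderivWithin_eq_zero μ (fun x hx => ?_) hA
  have hsum : HasFDerivWithinAt (fun y => y + A x (h y))
      (ContinuousLinearMap.id ℝ E + A x ∘L h' x) s x :=
    (hasFDerivWithinAt_id x s).add ((A x).hasFDerivAt.comp_hasFDerivWithinAt x (hh' x hx))
  exact hsum.congr (fun y hy => by simp [hzero y hy]) (by simp [hzero x hx])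

theorem ae_fderiv_eq_zero_of_eq_zero (h : E → F) : ∀ᵐ x ∂μ, h x = 0 → fderiv ℝ h x = 0 := by
  refine ae_iff.2 <| measure_eq_zero_of_hasFDerivWithinAt_ne_zero μ (h := h) (h' := fderiv ℝ h)
    (fun x hx => ?_) (fun _ hx => (Classical.not_imp.1 hx).1)
    (fun _ hx => (Classical.not_imp.1 hx).2)
  by_contra hd
  exact hx fun _ => fderiv_zero_of_not_differentiableAt fun hd' =>
    hd hd'.hasFDerivAt.hasFDerivWithinAt

end NullSets

section IndicatorExtension

theorem inter_frontier_nonempty_of_isPreconnected {X : Type*} [TopologicalSpace X] {s t : Set X}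
    (hs : IsPreconnected s) (hst : (s ∩ t).Nonempty) (hst' : (s \ t).Nonempty) :
    (s ∩ frontier t).Nonempty := by
  have := Subtype.preconnectedSpace hs
  obtain ⟨x, hxs, hxt⟩ := hst
  obtain ⟨y, hys, hyt⟩ := hst'
  obtain ⟨z, hz⟩ := nonempty_frontier_iff.2 ⟨(⟨⟨x, hxs⟩, hxt⟩ : ((↑) ⁻¹' t : Set s).Nonempty),
    (Set.ne_univ_iff_exists_notMem _).2 ⟨⟨y, hys⟩, hyt⟩⟩
  exact ⟨z, z.2, continuous_subtype_val.frontier_preimage_subset t hz⟩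

variable {E F : Type*} [NormedAddCommGroup E] [NormedSpace ℝ E] [NormedAddCommGroup F]

theorem lipschitzWith_indicator_of_eq_zero_on_frontier {Ω : Set E} {u : E → F} {C : NNReal}
    (hu : LipschitzWith C u) (hzero : ∀ x ∈ frontier Ω, u x = 0) :
    LipschitzWith C (Ω.indicator u) := by
  have hcross : ∀ x ∈ Ω, ∀ y ∉ Ω, ‖u x‖ ≤ C * ‖x - y‖ := fun x hx y hy => by
    obtain ⟨p, hp, hpΩ⟩ := inter_frontier_nonempty_of_isPreconnected
      (convex_segment x y).isPreconnected ⟨x, left_mem_segment ℝ x y, hx⟩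
      ⟨y, right_mem_segment ℝ x y, hy⟩
    calc ‖u x‖ = ‖u x - u p‖ := by rw [hzero p hpΩ, sub_zero]
      _ ≤ C * ‖x - p‖ := hu.norm_sub_le x p
      _ ≤ C * ‖x - y‖ := by
        rw [norm_sub_rev x p, norm_sub_rev x y]
        gcongr
        exact norm_sub_le_of_mem_segment hp
  refine LipschitzWith.of_dist_le_mul fun x y => ?_
  rw [dist_eq_norm, dist_eq_norm]
  by_cases hx : x ∈ Ω <;> by_cases hy : y ∈ Ω
  · simpa [hx, hy] using hu.norm_sub_le x y
  · simpa [hx, hy] using hcross x hx y hy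
  · simpa [hx, hy, norm_sub_rev y x] using hcross y hy x hx
  · simpa [hx, hy] using by positivity

end IndicatorExtension

section Extension

variable {E F : Type*} [NormedAddCommGroup E] [NormedSpace ℝ E] [FiniteDimensional ℝ E]
  [NormedAddCommGroup F] [NormedSpace ℝ F]

theorem exists_contDiff_hasCompactSupport_eventuallyEq {n : ℕ∞} {K U : Set E} {u : E → F}
    (hK : IsCompact K) (hU : IsOpen U) (hKU : K ⊆ U) (hu : ContDiffOn ℝ n u U) :
    ∃ w : E → F, ContDiff ℝ n w ∧ HasCompactSupport w ∧ ∀ x ∈ K, w =ᶠ[𝓝 x] u := by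
  obtain ⟨L, hL, hKL, hLU⟩ := exists_compact_between hK hU hKU
  obtain ⟨χ, hχone, hχzero, -⟩ := exists_contMDiffMap_one_nhds_of_subset_interior (n := n)
    (modelWithCornersSelf ℝ E) hK.isClosed hKL
  have hχL : tsupport χ ⊆ L :=
    closure_minimal (fun x hx => by_contra fun h => hx (hχzero x h)) hL.isClosed
  refine ⟨fun x => χ x • u x, ?_, ?_, fun x hx => ?_⟩
  · refine (contMDiff_of_tsupport fun x hx => ?_).contDiff
    have hxU : x ∈ U := hLU (hχL (tsupport_smul_subset_left _ _ hx))
    exact (χ.contMDiff.contDiff.contDiffAt.smul (hu.contDiffAt (hU.mem_nhds hxU))).contMDiffAt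
  · exact HasCompactSupport.smul_right (hL.of_isClosed_subset (isClosed_tsupport χ) hχL)
  · filter_upwards [eventually_nhdsSet_iff_forall.1 hχone x hx] with y hy
    rw [hy, one_smul]

end Extension

section VanishingBoundary

variable {E F : Type*} [NormedAddCommGroup E] [NormedSpace ℝ E] [FiniteDimensional ℝ E]
  [MeasurableSpace E] [BorelSpace E] (μ : Measure E) [μ.IsAddHaarMeasure]
  [NormedAddCommGroup F] [NormedSpace ℝ F]

theorem integral_lineDeriv_eq_zero {u : E → ℝ} {C : NNReal} (hu : LipschitzWith C u)
    (hc : HasCompactSupport u) (v : E) : ∫ x, lineDeriv ℝ u x v ∂μ = 0 := by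
  have hparts := (LipschitzWith.const (1 : ℝ) : LipschitzWith 0 fun _ : E => (1 : ℝ))
    |>.integral_lineDeriv_mul_eq (μ := μ) hu hc (-v)
  simpa [lineDeriv] using hparts.symm

theorem setIntegral_lineDeriv_eq_zero {Ω : Set E} (hΩ : IsOpen Ω) {u : E → ℝ} {C : NNReal}
    (hu : LipschitzWith C u) (hc : HasCompactSupport u) (hzero : ∀ x ∈ frontier Ω, u x = 0)
    (v : E) : ∫ x in Ω, lineDeriv ℝ u x v ∂μ = 0 := by
  have hlip := lipschitzWith_indicator_of_eq_zero_on_frontier hu hzero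
  have hae : Ω.indicator (fun x => lineDeriv ℝ u x v)
      =ᵐ[μ] fun x => lineDeriv ℝ (Ω.indicator u) x v := by
    filter_upwards [hlip.ae_differentiableAt (μ := μ),
      ae_fderiv_eq_zero_of_eq_zero μ (Ω.indicator u)] with x hdiff hfderiv
    by_cases hx : x ∈ Ω
    · rw [Set.indicator_of_mem hx]
      exact EventuallyEq.lineDeriv_eq (Set.eqOn_indicator.eventuallyEq_of_mem (hΩ.mem_nhds hx)).symm
    · rw [Set.indicator_of_notMem hx, hdiff.lineDeriv_eq_fderiv,
        hfderiv (Set.indicator_of_notMem hx u), zero_apply]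
  rw [← integral_indicator hΩ.measurableSet, integral_congr_ae hae]
  have hsupp : Function.support (Ω.indicator u) ⊆ Function.support u := by
    rw [Set.support_indicator]
    exact Set.inter_subset_right
  exact integral_lineDeriv_eq_zero μ hlip (hc.mono hsupp) v

variable {Ω W : Set E} {u : E → F}

theorem integrableOn_fderiv_apply (hb : IsBounded Ω) (hW : IsOpen W) (hΩW : closure Ω ⊆ W)
    (hu : ContDiffOn ℝ 1 u W) (v : E) : IntegrableOn (fun x => fderiv ℝ u x v) Ω μ := by
  have hcont : ContinuousOn (fun x => fderiv ℝ u x v) (closure Ω) :=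
    ((hu.continuousOn_fderiv_of_isOpen hW le_rfl).clm_apply continuousOn_const).mono hΩW
  exact (hcont.integrableOn_compact hb.isCompact_closure).mono_set subset_closure

theorem setIntegral_fderiv_apply_eq_zero [CompleteSpace F] (hΩ : IsOpen Ω) (hb : IsBounded Ω)
    (hW : IsOpen W) (hΩW : closure Ω ⊆ W) (hu : ContDiffOn ℝ 1 u W)
    (hzero : ∀ x ∈ frontier Ω, u x = 0) (v : E) :
    ∫ x in Ω, fderiv ℝ u x v ∂μ = 0 := by
  refine SeparatingDual.eq_zero_of_forall_dual_eq_zero (R := ℝ) fun ℓ => ?_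
  obtain ⟨w, hw, hwc, hwu⟩ := exists_contDiff_hasCompactSupport_eventuallyEq hb.isCompact_closure
    hW hΩW (ℓ.contDiff.comp_contDiffOn hu)
  obtain ⟨C, hC⟩ := hw.lipschitzWith_of_hasCompactSupport hwc one_ne_zero
  have hwzero : ∀ x ∈ frontier Ω, w x = 0 := fun x hx => by
    simp [(hwu x (frontier_subset_closure hx)).self_of_nhds, hzero x hx]
  rw [← ℓ.integral_comp_comm (integrableOn_fderiv_apply μ hb hW hΩW hu v),
    ← setIntegral_lineDeriv_eq_zero μ hΩ hC hwc hwzero v]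
  refine setIntegral_congr_fun hΩ.measurableSet fun x hx => ?_
  have hux : DifferentiableAt ℝ u x :=
    (hu.differentiableOn one_ne_zero).differentiableAt (hW.mem_nhds (hΩW (subset_closure hx)))
  rw [(hw.differentiable one_ne_zero x).lineDeriv_eq_fderiv, (hwu x (subset_closure hx)).fderiv_eq,
    (ℓ.hasFDerivAt.comp x hux.hasFDerivAt).fderiv, ContinuousLinearMap.comp_apply]

end VanishingBoundary

section Wirtinger

/-- The Wirtinger derivative `∂/∂z`; it is `0` where `u` is not real-differentiable. -/
noncomputable def dz (u : ℂ → ℂ) (z : ℂ) : ℂ :=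
  (fderiv ℝ u z 1 - I * fderiv ℝ u z I) / 2

/-- The Wirtinger derivative `∂/∂z̄`; it is `0` where `u` is not real-differentiable. -/
noncomputable def dbar (u : ℂ → ℂ) (z : ℂ) : ℂ :=
  (fderiv ℝ u z 1 + I * fderiv ℝ u z I) / 2

variable {f u w : ℂ → ℂ} {z : ℂ}

theorem dz_eq_of_eventuallyEq (h : u =ᶠ[𝓝 z] w) : dz u z = dz w z := by
  rw [dz, dz, h.fderiv_eq]

theorem dbar_eq_of_eventuallyEq (h : u =ᶠ[𝓝 z] w) : dbar u z = dbar w z := by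
  rw [dbar, dbar, h.fderiv_eq]

theorem fderiv_real_apply (hf : DifferentiableAt ℂ f z) (v : ℂ) :
    fderiv ℝ f z v = v * deriv f z := by
  rw [hf.fderiv_restrictScalars ℝ, ContinuousLinearMap.coe_restrictScalars', fderiv_eq_smul_deriv,
    smul_eq_mul]

theorem dz_eq_deriv (hf : DifferentiableAt ℂ f z) : dz f z = deriv f z := by
  rw [dz, fderiv_real_apply hf, fderiv_real_apply hf]
  linear_combination -deriv f z / 2 * I_mul_I

theorem dbar_eq_zero (hf : DifferentiableAt ℂ f z) : dbar f z = 0 := by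
  rw [dbar, fderiv_real_apply hf, fderiv_real_apply hf]
  linear_combination deriv f z / 2 * I_mul_I

theorem dbar_conj (z : ℂ) : dbar (starRingEnd ℂ) z = 1 := by
  have hconj : fderiv ℝ (starRingEnd ℂ) z = conjCLE := conjCLE.hasFDerivAt.fderiv
  simp [dbar, hconj]

theorem dbar_add (hu : DifferentiableAt ℝ u z) (hw : DifferentiableAt ℝ w z) :
    dbar (fun z => u z + w z) z = dbar u z + dbar w z := by
  simp only [dbar, fderiv_fun_add hu hw, _root_.add_apply]
  ring

theorem dbar_sub (hu : DifferentiableAt ℝ u z) (hw : DifferentiableAt ℝ w z) :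
    dbar (fun z => u z - w z) z = dbar u z - dbar w z := by
  simp only [dbar, fderiv_fun_sub hu hw, _root_.sub_apply]
  ring

theorem dbar_sum {ι : Type*} {t : Finset ι} {u : ι → ℂ → ℂ}
    (hu : ∀ i ∈ t, DifferentiableAt ℝ (u i) z) :
    dbar (fun z => ∑ i ∈ t, u i z) z = ∑ i ∈ t, dbar (u i) z := by
  simp only [dbar, fderiv_fun_sum hu, _root_.sum_apply, Finset.mul_sum, Finset.sum_add_distrib,
    Finset.sum_div, add_div]

theorem dbar_mul_of_differentiableAt (hf : DifferentiableAt ℂ f z) (hu : DifferentiableAt ℝ u z) :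
    dbar (fun z => f z * u z) z = f z * dbar u z := by
  have hmul := fderiv_fun_mul (hf.restrictScalars ℝ) hu
  simp only [dbar, hmul, _root_.add_apply, _root_.smul_apply, smul_eq_mul, fderiv_real_apply hf]
  linear_combination u z * deriv f z / 2 * I_mul_I

theorem contDiff_dz {n : WithTop ℕ∞} (hu : ContDiff ℝ (n + 1) u) : ContDiff ℝ n (dz u) := by
  have hfderiv (v : ℂ) : ContDiff ℝ n fun z => fderiv ℝ u z v :=
    (hu.fderiv_right le_rfl).clm_apply contDiff_const
  exact ((hfderiv 1).sub (contDiff_const.mul (hfderiv I))).div_const 2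

theorem contDiff_dbar {n : WithTop ℕ∞} (hu : ContDiff ℝ (n + 1) u) : ContDiff ℝ n (dbar u) := by
  have hfderiv (v : ℂ) : ContDiff ℝ n fun z => fderiv ℝ u z v :=
    (hu.fderiv_right le_rfl).clm_apply contDiff_const
  exact ((hfderiv 1).add (contDiff_const.mul (hfderiv I))).div_const 2

theorem dz_dbar_comm (hu : ContDiffAt ℝ 2 u z) : dz (dbar u) z = dbar (dz u) z := by
  have hdiff : DifferentiableAt ℝ (fderiv ℝ u) z :=
    (hu.fderiv_right (m := 1) le_rfl).differentiableAt one_ne_zero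
  have happly (v : ℂ) : HasFDerivAt (fun z => fderiv ℝ u z v)
      ((ContinuousLinearMap.apply ℝ ℂ v) ∘L fderiv ℝ (fderiv ℝ u) z) z :=
    (ContinuousLinearMap.apply ℝ ℂ v).hasFDerivAt.comp z hdiff.hasFDerivAt
  have hdbar := (((happly 1).add ((happly I).const_mul I)).mul_const (2⁻¹ : ℂ)).fderiv
  have hdz := (((happly 1).sub ((happly I).const_mul I)).mul_const (2⁻¹ : ℂ)).fderiv
  have hsymm := (hu.isSymmSndFDerivAt (by simp)).eq 1 I
  change fderiv ℝ (dbar u) z = _ at hdbar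
  change fderiv ℝ (dz u) z = _ at hdz
  rw [dz, dbar, hdbar, hdz]
  simp only [smul_add, add_apply, smul_apply, ContinuousLinearMap.comp_apply,
    ContinuousLinearMap.apply_apply, smul_eq_mul, sub_apply, ne_eq, OfNat.ofNat_ne_zero,
    not_false_eq_true, div_left_inj']
  linear_combination I * hsymm

variable {Ω W : Set ℂ}

theorem integrableOn_dz (hb : IsBounded Ω) (hW : IsOpen W) (hΩW : closure Ω ⊆ W)
    (hu : ContDiffOn ℝ 1 u W) : IntegrableOn (dz u) Ω :=
  ((integrableOn_fderiv_apply volume hb hW hΩW hu 1).sub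
    ((integrableOn_fderiv_apply volume hb hW hΩW hu I).const_mul I)).div_const 2

theorem integrableOn_dbar (hb : IsBounded Ω) (hW : IsOpen W) (hΩW : closure Ω ⊆ W)
    (hu : ContDiffOn ℝ 1 u W) : IntegrableOn (dbar u) Ω :=
  ((integrableOn_fderiv_apply volume hb hW hΩW hu 1).add
    ((integrableOn_fderiv_apply volume hb hW hΩW hu I).const_mul I)).div_const 2

theorem setIntegral_dz_eq_zero (hΩ : IsOpen Ω) (hb : IsBounded Ω) (hW : IsOpen W)
    (hΩW : closure Ω ⊆ W) (hu : ContDiffOn ℝ 1 u W) (hzero : ∀ z ∈ frontier Ω, u z = 0) :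
    ∫ z in Ω, dz u z = 0 := by
  have hint := integrableOn_fderiv_apply volume hb hW hΩW hu
  have hvanish := setIntegral_fderiv_apply_eq_zero volume hΩ hb hW hΩW hu hzero
  simp only [dz, integral_div, integral_sub (hint 1) ((hint I).const_mul I), integral_const_mul,
    hvanish, mul_zero, sub_zero, zero_div]

theorem setIntegral_dbar_eq_zero (hΩ : IsOpen Ω) (hb : IsBounded Ω) (hW : IsOpen W)
    (hΩW : closure Ω ⊆ W) (hu : ContDiffOn ℝ 1 u W) (hzero : ∀ z ∈ frontier Ω, u z = 0) :
    ∫ z in Ω, dbar u z = 0 := by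
  have hint := integrableOn_fderiv_apply volume hb hW hΩW hu
  have hvanish := setIntegral_fderiv_apply_eq_zero volume hΩ hb hW hΩW hu hzero
  simp only [dbar, integral_div, integral_add (hint 1) ((hint I).const_mul I), integral_const_mul,
    hvanish, mul_zero, add_zero, zero_div]

theorem contDiffOn_real_of_differentiableOn {n : WithTop ℕ∞} (hW : IsOpen W)
    (hf : DifferentiableOn ℂ f W) : ContDiffOn ℝ n f W :=
  (hf.contDiffOn hW).restrict_scalars ℝ

/- `∮ G' dz = 0`, with Green's formula replaced by the vanishing boundary case: extend `G` smoothly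
from a neighbourhood of the frontier to `P`; then `u - ∂P` and `∂̄P` vanish on the frontier and
`∂̄u = ∂̄(u - ∂P) + ∂(∂̄P)`. -/
theorem setIntegral_dbar_eq_zero_of_eq_deriv_on_frontier {V : Set ℂ} {G : ℂ → ℂ}
    (hΩ : IsOpen Ω) (hb : IsBounded Ω) (hW : IsOpen W) (hΩW : closure Ω ⊆ W)
    (hu : ContDiffOn ℝ 1 u W) (hV : IsOpen V) (hΩV : frontier Ω ⊆ V)
    (hG : DifferentiableOn ℂ G V) (huG : ∀ z ∈ frontier Ω, u z = deriv G z) :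
    ∫ z in Ω, dbar u z = 0 := by
  obtain ⟨P, hP, -, hPG⟩ := exists_contDiff_hasCompactSupport_eventuallyEq (n := 2)
    (hb.isCompact_closure.of_isClosed_subset isClosed_frontier frontier_subset_closure) hV hΩV
    (contDiffOn_real_of_differentiableOn hV hG)
  have hG' (z : ℂ) (hz : z ∈ frontier Ω) : DifferentiableAt ℂ G z :=
    hG.differentiableAt (hV.mem_nhds (hΩV hz))
  have hdz : ContDiff ℝ 1 (dz P) := contDiff_dz hP
  have hdbar : ContDiff ℝ 1 (dbar P) := contDiff_dbar hP
  have hdiff : ∫ z in Ω, dbar (fun z => u z - dz P z) z = 0 :=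
    setIntegral_dbar_eq_zero hΩ hb hW hΩW (hu.sub hdz.contDiffOn) fun z hz => by
      rw [dz_eq_of_eventuallyEq (hPG z hz), dz_eq_deriv (hG' z hz), huG z hz, sub_self]
  have hmixed : ∫ z in Ω, dz (dbar P) z = 0 :=
    setIntegral_dz_eq_zero hΩ hb isOpen_univ (Set.subset_univ _) hdbar.contDiffOn fun z hz => by
      rw [dbar_eq_of_eventuallyEq (hPG z hz), dbar_eq_zero (hG' z hz)]
  have hsplit : ∀ z ∈ Ω, dbar (fun z => u z - dz P z) z = dbar u z - dz (dbar P) z := fun z hz => by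
    rw [dz_dbar_comm hP.contDiffAt, dbar_sub _ (hdz.differentiable one_ne_zero z)]
    exact (hu.differentiableOn one_ne_zero).differentiableAt
      (hW.mem_nhds (hΩW (subset_closure hz)))
  rwa [setIntegral_congr_fun hΩ.measurableSet hsplit,
    integral_sub (integrableOn_dbar hb hW hΩW hu)
      (integrableOn_dz hb isOpen_univ (Set.subset_univ _) hdbar.contDiffOn),
    hmixed, sub_zero] at hdiff

end Wirtinger

section PolarCoordinates

variable {E : Type*} [NormedAddCommGroup E] [NormedSpace ℝ E]

theorem integrableOn_smul_comp_polarCoord_symm {k : ℂ → E} (hk : Integrable k) :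
    IntegrableOn (fun p => p.1 • k (Complex.polarCoord.symm p)) polarCoord.target := by
  have hk' : IntegrableOn (fun p => k (measurableEquivRealProd.symm p))
      (polarCoord.symm '' polarCoord.target) :=
    (volume_preserving_equiv_real_prod.symm.integrable_comp_of_integrable hk).integrableOn
  rw [integrableOn_image_iff_integrableOn_abs_det_fderiv_smul volume
    polarCoord.open_target.measurableSet
    (fun p _ => (hasFDerivAt_polarCoord_symm p).hasFDerivWithinAt) polarCoord.symm.injOn] at hk'
  refine hk'.congr_fun (fun p hp => ?_) polarCoord.open_target.measurableSet
  simp only [det_fderivPolarCoordSymm, measurableEquivRealProd_symm_polarCoord_symm_apply]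
  rw [abs_of_pos hp.1]

theorem integral_eq_integral_circleMap {k : ℂ → E} (hk : Integrable k) (a : ℂ) :
    ∫ z, k z = ∫ r in Set.Ioi 0, ∫ θ in (0)..(2 * Real.pi), r • k (circleMap a r θ) := by
  have hshift : Integrable fun z => k (a + z) := hk.comp_add_left a
  have hpolar (r θ : ℝ) : a + Complex.polarCoord.symm (r, θ) = circleMap a r θ := by
    simp only [Complex.polarCoord_symm_apply, circleMap, exp_mul_I, ofReal_cos, ofReal_sin]
  rw [← integral_add_left_eq_self k a, ← Complex.integral_comp_polarCoord_symm,
    Measure.volume_eq_prod, polarCoord_target,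
    setIntegral_prod _ (integrableOn_smul_comp_polarCoord_symm hshift)]
  refine setIntegral_congr_fun measurableSet_Ioi fun r _ => ?_
  have hper := ((periodic_circleMap a r).comp fun z => r • k z).intervalIntegral_add_eq (-Real.pi) 0
  rw [zero_add, neg_add_eq_sub, two_mul, add_sub_cancel_right, ← two_mul] at hper
  simp only [Function.comp_apply] at hper
  simp only [hpolar]
  rw [← integral_Ioc_eq_integral_Ioo, ← intervalIntegral.integral_of_le
    (neg_le_self Real.pi_pos.le), hper]

end PolarCoordinates

section DiscCutoff

/-- A smooth function of `t` equal to `1` for `t ≤ R ^ 2 / 3` and to `0` for `2 * R ^ 2 / 3 ≤ t`;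
it is evaluated at squared distances, which keeps `discCutoff` smooth at the center. -/
noncomputable def cutoffProfile (R t : ℝ) : ℝ := Real.smoothTransition (2 - 3 * (t / R ^ 2))

/-- A smooth radial cutoff function, equal to `1` near `a` and supported in the disc of center `a`
and radius `R`. -/
noncomputable def discCutoff (a : ℂ) (R : ℝ) (z : ℂ) : ℂ := cutoffProfile R (‖z - a‖ ^ 2)

variable {a z : ℂ} {R t : ℝ}

theorem contDiff_cutoffProfile {n : ℕ∞} : ContDiff ℝ n (cutoffProfile R) :=
  Real.smoothTransition.contDiff.comp
    (contDiff_const.sub (contDiff_const.mul (contDiff_id.div_const _)))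

theorem cutoffProfile_eq_one (hR : 0 < R) (ht : t ≤ R ^ 2 / 3) : cutoffProfile R t = 1 := by
  refine Real.smoothTransition.one_of_one_le ?_
  have hratio : t / R ^ 2 ≤ 1 / 3 := (div_le_iff₀ (by positivity)).2 (by linarith)
  linarith

theorem cutoffProfile_eq_zero (hR : 0 < R) (ht : 2 * R ^ 2 / 3 ≤ t) : cutoffProfile R t = 0 := by
  refine Real.smoothTransition.zero_of_nonpos ?_
  have hratio : 2 / 3 ≤ t / R ^ 2 := (le_div_iff₀ (by positivity)).2 (by linarith)
  linarith

theorem deriv_cutoffProfile_eq_zero (hR : 0 < R) (ht : 2 * R ^ 2 / 3 < t) :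
    deriv (cutoffProfile R) t = 0 := by
  have hzero : cutoffProfile R =ᶠ[𝓝 t] fun _ => 0 := by
    filter_upwards [eventually_gt_nhds ht] with x hx using cutoffProfile_eq_zero hR hx.le
  rw [hzero.deriv_eq, deriv_const]

theorem integral_Ioi_mul_deriv_cutoffProfile (hR : 0 < R) :
    ∫ r in Set.Ioi 0, r * deriv (cutoffProfile R) (r ^ 2) = -(1 / 2) := by
  have hsmooth : ContDiff ℝ 1 fun r => cutoffProfile R (r ^ 2) :=
    contDiff_cutoffProfile.comp (contDiff_id.pow 2)
  have hsupp : HasCompactSupport fun r => cutoffProfile R (r ^ 2) :=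
    HasCompactSupport.intro (isCompact_closedBall 0 R) fun r hr => by
      have hsq : R ^ 2 < r ^ 2 := by
        rw [mem_closedBall_zero_iff, not_le, Real.norm_eq_abs] at hr
        exact (sq_lt_sq₀ hR.le (abs_nonneg r)).2 hr |>.trans_eq (sq_abs r)
      exact cutoffProfile_eq_zero hR (by nlinarith [sq_nonneg R])
  have hderiv (r : ℝ) :
      deriv (fun r => cutoffProfile R (r ^ 2)) r = 2 * (r * deriv (cutoffProfile R) (r ^ 2)) := by
    have hψ := ((contDiff_cutoffProfile (R := R) (n := 1)).differentiable one_ne_zero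
      (r ^ 2)).hasDerivAt
    refine (HasDerivAt.comp r (h := fun r => r ^ 2) hψ (hasDerivAt_pow 2 r)).deriv.trans ?_
    ring
  have hftc := hsupp.integral_Ioi_deriv_eq hsmooth 0
  simp only [hderiv, integral_const_mul] at hftc
  rw [cutoffProfile_eq_one hR (by simp only [zero_pow two_ne_zero]; positivity)] at hftc
  linarith

theorem contDiff_discCutoff {n : ℕ∞} : ContDiff ℝ n (discCutoff a R) :=
  ofRealCLM.contDiff.comp
    (contDiff_cutoffProfile.comp ((contDiff_id.sub contDiff_const).norm_sq ℝ))

theorem discCutoff_eventuallyEq_one (hR : 0 < R) : discCutoff a R =ᶠ[𝓝 a] fun _ => 1 := by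
  have hcont : ContinuousAt (fun z => ‖z - a‖ ^ 2) a := by fun_prop
  filter_upwards [hcont.eventually_le_const (u := R ^ 2 / 3) (by simpa using by positivity)]
    with z hz
  rw [discCutoff, cutoffProfile_eq_one hR hz, ofReal_one]

theorem tsupport_discCutoff_subset (hR : 0 < R) :
    tsupport (discCutoff a R) ⊆ Metric.ball a R := by
  have hclosed : IsClosed {z : ℂ | ‖z - a‖ ^ 2 ≤ 2 * R ^ 2 / 3} :=
    isClosed_le (by fun_prop) continuous_const
  refine (closure_minimal (fun z hz => ?_) hclosed).trans fun z hz => ?_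
  · by_contra hz'
    exact hz (by rw [discCutoff, cutoffProfile_eq_zero hR (not_le.1 hz').le, ofReal_zero])
  · rw [mem_ball_iff_norm, ← sq_lt_sq₀ (norm_nonneg _) hR.le]
    exact hz.trans_lt (by nlinarith [sq_pos_of_pos hR])

theorem dbar_ofReal_comp_norm_sub_sq {ψ : ℝ → ℝ} (hψ : DifferentiableAt ℝ ψ (‖z - a‖ ^ 2)) :
    dbar (fun w => (ψ (‖w - a‖ ^ 2) : ℂ)) z = deriv ψ (‖z - a‖ ^ 2) * (z - a) := by
  have hsq := ((hasFDerivAt_id (𝕜 := ℝ) z).sub_const a).norm_sq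
  have hcomp := (ofRealCLM.hasFDerivAt.comp z (hψ.hasDerivAt.comp_hasFDerivAt z hsq)).fderiv
  change fderiv ℝ (fun w => (ψ (‖w - a‖ ^ 2) : ℂ)) z = _ at hcomp
  have hfderiv (v : ℂ) : fderiv ℝ (fun w => (ψ (‖w - a‖ ^ 2) : ℂ)) z v =
      deriv ψ (‖z - a‖ ^ 2) * (2 * inner ℝ (z - a) v : ℝ) := by
    simp [hcomp, -map_sub, -Complex.inner]
  have hinner_one : inner ℝ (z - a) 1 = (z - a).re := by simp [Complex.inner]
  have hinner_I : inner ℝ (z - a) I = (z - a).im := by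
    simp [Complex.inner, neg_add_eq_sub]
  rw [dbar, hfderiv, hfderiv, hinner_one, hinner_I]
  push_cast
  linear_combination ((deriv ψ (‖z - a‖ ^ 2) : ℝ) : ℂ) * re_add_im (z - a)

theorem dbar_discCutoff :
    dbar (discCutoff a R) z = deriv (cutoffProfile R) (‖z - a‖ ^ 2) * (z - a) :=
  dbar_ofReal_comp_norm_sub_sq ((contDiff_cutoffProfile (n := 1)).differentiable one_ne_zero _)

theorem tsupport_dbar_discCutoff_subset (hR : 0 < R) :
    tsupport (dbar (discCutoff a R)) ⊆ Metric.ball a R \ {a} := by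
  refine Set.subset_sdiff_singleton (Set.Subset.trans ?_ (tsupport_discCutoff_subset hR)) ?_
  · refine closure_minimal (fun z hz => ?_) (isClosed_tsupport _)
    by_contra hz'
    exact hz <| (dbar_eq_of_eventuallyEq (notMem_tsupport_iff_eventuallyEq.1 hz')).trans
      (dbar_eq_zero (differentiableAt_const 0))
  · rw [notMem_tsupport_iff_eventuallyEq]
    filter_upwards [(discCutoff_eventuallyEq_one hR).eventuallyEq_nhds] with z hz
    exact (dbar_eq_of_eventuallyEq hz).trans (dbar_eq_zero (differentiableAt_const 1))

variable {g : ℂ → ℂ}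

theorem integrable_mul_dbar_discCutoff (hR : 0 < R)
    (hg : ContinuousOn g (Metric.ball a R \ {a})) :
    Integrable fun z => g z * dbar (discCutoff a R) z := by
  have hsupp : tsupport (fun z => g z * dbar (discCutoff a R) z) ⊆ Metric.ball a R \ {a} :=
    tsupport_mul_subset_right.trans (tsupport_dbar_discCutoff_subset hR)
  have hdbar : Continuous (dbar (discCutoff a R)) :=
    (contDiff_dbar (n := 0) (contDiff_discCutoff (n := 1))).continuous
  refine ((hg.mul hdbar.continuousOn).continuous_of_tsupport_subset
    (Metric.isOpen_ball.sdiff isClosed_singleton) hsupp).integrable_of_hasCompactSupport ?_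
  exact (isCompact_closedBall a R).of_isClosed_subset (isClosed_tsupport _)
    ((hsupp.trans Set.sdiff_subset).trans Metric.ball_subset_closedBall)

theorem circleIntegral_eq_of_differentiableOn_punctured_closedBall
    (hg : DifferentiableOn ℂ g (Metric.closedBall a R \ {a})) {r : ℝ} (hr : 0 < r) (hrR : r ≤ R) :
    ∮ z in C(a, r), g z = ∮ z in C(a, R), g z := by
  refine (circleIntegral_eq_of_differentiable_on_annulus_off_countable hr hrR Set.countable_empty
    (hg.continuousOn.mono ?_) fun z hz => ?_).symm
  · exact Set.sdiff_subset_sdiff_right (Set.singleton_subset_iff.2 (Metric.mem_ball_self hr))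
  · have hza : z ≠ a := fun h => hz.1.2 (h ▸ Metric.mem_closedBall_self hr.le)
    exact hg.differentiableAt <| inter_mem (Metric.closedBall_mem_nhds_of_mem hz.1.1)
      (isOpen_compl_singleton.mem_nhds hza)

theorem intervalIntegral_circleMap_mul_dbar_discCutoff (r : ℝ) :
    ∫ θ in (0)..(2 * Real.pi),
        r • (g (circleMap a r θ) * dbar (discCutoff a R) (circleMap a r θ)) =
      ((r * deriv (cutoffProfile R) (r ^ 2) : ℝ) : ℂ) * (1 / I * ∮ z in C(a, r), g z) := by
  rw [circleIntegral, ← intervalIntegral.integral_const_mul, ← intervalIntegral.integral_const_mul]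
  refine intervalIntegral.integral_congr fun θ _ => ?_
  simp only [dbar_discCutoff, circleMap_sub_center, norm_circleMap_zero, sq_abs, deriv_circleMap,
    real_smul, smul_eq_mul]
  push_cast
  field_simp

theorem integral_mul_dbar_discCutoff (hR : 0 < R)
    (hg : DifferentiableOn ℂ g (Metric.closedBall a R \ {a})) :
    ∫ z, g z * dbar (discCutoff a R) z = -(1 / (2 * I)) * ∮ z in C(a, R), g z := by
  have hcircle : ∀ r ∈ Set.Ioi (0 : ℝ), ∫ θ in (0)..(2 * Real.pi),
        r • (g (circleMap a r θ) * dbar (discCutoff a R) (circleMap a r θ)) =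
      ((r * deriv (cutoffProfile R) (r ^ 2) : ℝ) : ℂ) * (1 / I * ∮ z in C(a, R), g z) := by
    intro r hr
    rw [intervalIntegral_circleMap_mul_dbar_discCutoff]
    rcases le_or_gt r R with hrR | hRr
    · rw [circleIntegral_eq_of_differentiableOn_punctured_closedBall hg hr hrR]
    · rw [deriv_cutoffProfile_eq_zero hR (by nlinarith), mul_zero, ofReal_zero, zero_mul, zero_mul]
  rw [integral_eq_integral_circleMap (integrable_mul_dbar_discCutoff hR
    (hg.continuousOn.mono (Set.sdiff_subset_sdiff_left Metric.ball_subset_closedBall))) a,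
    setIntegral_congr_fun measurableSet_Ioi hcircle, integral_mul_const, integral_complex_ofReal,
    integral_Ioi_mul_deriv_cutoffProfile hR]
  push_cast
  ring

end DiscCutoff

section Excision

variable {ι : Type*} [Fintype ι] {g : ℂ → ℂ} {a : ι → ℂ} {R : ι → ℝ} {z : ℂ}

/-- The function `g` multiplied by a cutoff factor that vanishes near the points `a j` and equals
`1` off the discs of centers `a j` and radii `R j`, so that isolated singularities of `g` at the
points `a j` are removed. -/
noncomputable def excise (g : ℂ → ℂ) (a : ι → ℂ) (R : ι → ℝ) (z : ℂ) : ℂ :=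
  g z * (1 - ∑ j, discCutoff (a j) (R j) z)

theorem excise_eq_self (hR : ∀ j, 0 < R j) (hz : ∀ j, z ∉ Metric.ball (a j) (R j)) :
    excise g a R z = g z := by
  have hzero (j : ι) : discCutoff (a j) (R j) z = 0 :=
    image_eq_zero_of_notMem_tsupport fun h => hz j (tsupport_discCutoff_subset (hR j) h)
  simp only [excise, hzero, Finset.sum_const_zero, sub_zero, mul_one]

theorem excise_eventuallyEq_zero (hR : ∀ j, 0 < R j)
    (hdisj : Pairwise (Function.onFun Disjoint fun j => Metric.closedBall (a j) (R j))) (j : ι) :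
    excise g a R =ᶠ[𝓝 (a j)] 0 := by
  filter_upwards [discCutoff_eventuallyEq_one (hR j), Metric.closedBall_mem_nhds (a j) (hR j)]
    with z hone hzj
  have hzero : ∀ k ≠ j, discCutoff (a k) (R k) z = 0 := fun k hkj =>
    image_eq_zero_of_notMem_tsupport fun h => (hdisj hkj).le_bot
      ⟨Metric.ball_subset_closedBall (tsupport_discCutoff_subset (hR k) h), hzj⟩
  rw [excise, Fintype.sum_eq_single j hzero, hone, sub_self, mul_zero, Pi.zero_apply]

theorem contDiff_one_sub_sum_discCutoff :
    ContDiff ℝ 1 fun z => 1 - ∑ j, discCutoff (a j) (R j) z :=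
  contDiff_const.sub (ContDiff.sum fun _ _ => contDiff_discCutoff (n := 1))

theorem contDiffOn_excise (hR : ∀ j, 0 < R j)
    (hdisj : Pairwise (Function.onFun Disjoint fun j => Metric.closedBall (a j) (R j))) {U : Set ℂ}
    (hU : IsOpen U) (hg : DifferentiableOn ℂ g (U \ Set.range a)) :
    ContDiffOn ℝ 1 (excise g a R) U := by
  have hopen : IsOpen (U \ Set.range a) := hU.sdiff (Set.finite_range a).isClosed
  intro z hz
  by_cases hza : z ∈ Set.range a
  · obtain ⟨j, rfl⟩ := hza
    exact (contDiffAt_const.congr_of_eventuallyEq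
      (excise_eventuallyEq_zero hR hdisj j)).contDiffWithinAt
  · exact (((contDiffOn_real_of_differentiableOn hopen hg).contDiffAt
      (hopen.mem_nhds ⟨hz, hza⟩)).mul contDiff_one_sub_sum_discCutoff.contDiffAt).contDiffWithinAt

theorem dbar_excise (hg : DifferentiableAt ℂ g z) :
    dbar (excise g a R) z = -∑ j, g z * dbar (discCutoff (a j) (R j)) z := by
  have hdiff (j : ι) : DifferentiableAt ℝ (discCutoff (a j) (R j)) z :=
    (contDiff_discCutoff (n := 1)).differentiable one_ne_zero z
  refine (dbar_mul_of_differentiableAt hg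
    (contDiff_one_sub_sum_discCutoff.differentiable one_ne_zero z)).trans ?_
  rw [dbar_sub (differentiableAt_const 1) (DifferentiableAt.fun_sum fun j _ => hdiff j),
    dbar_sum fun j _ => hdiff j, dbar_eq_zero (differentiableAt_const 1), zero_sub, mul_neg,
    Finset.mul_sum]

theorem setIntegral_dbar_excise {Ω : Set ℂ} (hΩ : IsOpen Ω) (hR : ∀ j, 0 < R j)
    (hballs : ∀ j, Metric.closedBall (a j) (R j) ⊆ Ω)
    (hdisj : Pairwise (Function.onFun Disjoint fun j => Metric.closedBall (a j) (R j)))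
    (hg : DifferentiableOn ℂ g (Ω \ Set.range a)) :
    ∫ z in Ω, dbar (excise g a R) z = 1 / (2 * I) * ∑ j, ∮ z in C(a j, R j), g z := by
  have hpunctured (j : ι) : DifferentiableOn ℂ g (Metric.closedBall (a j) (R j) \ {a j}) := by
    refine hg.mono fun z hz => ⟨hballs j hz.1, ?_⟩
    rintro ⟨k, rfl⟩
    exact (hdisj fun hkj : k = j => hz.2 (congrArg a hkj)).le_bot
      ⟨Metric.mem_closedBall_self (hR k).le, hz.1⟩
  have hdbar : ∀ᵐ z, z ∈ Ω →
      dbar (excise g a R) z = -∑ j, g z * dbar (discCutoff (a j) (R j)) z := by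
    filter_upwards [(Set.finite_range a).countable.ae_notMem volume] with z hza hz
    exact dbar_excise (hg.differentiableAt
      ((hΩ.sdiff (Set.finite_range a).isClosed).mem_nhds ⟨hz, hza⟩))
  have hvanish (j : ι) : ∀ z ∉ Ω, g z * dbar (discCutoff (a j) (R j)) z = 0 := fun z hz => by
    rw [image_eq_zero_of_notMem_tsupport fun h => hz <| hballs j <| Metric.ball_subset_closedBall
      (tsupport_dbar_discCutoff_subset (hR j) h).1, mul_zero]
  have hint (j : ι) : Integrable fun z => g z * dbar (discCutoff (a j) (R j)) z :=
    integrable_mul_dbar_discCutoff (hR j) ((hpunctured j).continuousOn.mono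
      (Set.sdiff_subset_sdiff_left Metric.ball_subset_closedBall))
  rw [setIntegral_congr_ae hΩ.measurableSet hdbar, integral_neg,
    integral_finsetSum _ fun j _ => (hint j).integrableOn, Finset.mul_sum, ← Finset.sum_neg_distrib]
  refine Finset.sum_congr rfl fun j _ => ?_
  rw [setIntegral_eq_integral_of_forall_compl_eq_zero (hvanish j),
    integral_mul_dbar_discCutoff (hR j) (hpunctured j), neg_mul, neg_neg]

end Excision

section Quadrature

variable {Ω V O : Set ℂ} {S f : ℂ → ℂ}

theorem setIntegral_deriv_eq_neg_setIntegral_dbar (hΩ : IsOpen Ω) (hb : IsBounded Ω) (hV : IsOpen V)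
    (hΩV : frontier Ω ⊆ V) (hS : DifferentiableOn ℂ S V)
    (hSval : ∀ z ∈ frontier Ω, S z = (starRingEnd ℂ) z) (hO : IsOpen O) (hΩO : closure Ω ⊆ O)
    (hf : DifferentiableOn ℂ f O) {W : Set ℂ} {Q : ℂ → ℂ} (hW : IsOpen W) (hΩW : closure Ω ⊆ W)
    (hQ : ContDiffOn ℝ 1 Q W) (hQS : ∀ z ∈ frontier Ω, Q z = f z * deriv S z) :
    ∫ z in Ω, deriv f z = -∫ z in Ω, dbar Q z := by
  have hf' : DifferentiableOn ℂ (deriv f) O := hf.deriv hO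
  have hconj : ContDiff ℝ 1 (starRingEnd ℂ) := conjCLE.contDiff
  have hfconj : ContDiffOn ℝ 1 (fun z => deriv f z * (starRingEnd ℂ) z) O :=
    (contDiffOn_real_of_differentiableOn hO hf').mul hconj.contDiffOn
  have hzero : ∫ z in Ω, dbar (fun z => deriv f z * (starRingEnd ℂ) z + Q z) z = 0 :=
    setIntegral_dbar_eq_zero_of_eq_deriv_on_frontier hΩ hb (hO.inter hW)
      (Set.subset_inter hΩO hΩW)
      ((hfconj.mono Set.inter_subset_left).add (hQ.mono Set.inter_subset_right))
      (hV.inter hO) (Set.subset_inter hΩV (frontier_subset_closure.trans hΩO))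
      ((hf.mono Set.inter_subset_right).mul (hS.mono Set.inter_subset_left)) fun z hz => by
        rw [deriv_mul (hf.differentiableAt (hO.mem_nhds (hΩO (frontier_subset_closure hz))))
          (hS.differentiableAt (hV.mem_nhds (hΩV hz))), hSval z hz, hQS z hz]
  have hsplit : ∀ z ∈ Ω, dbar (fun z => deriv f z * (starRingEnd ℂ) z + Q z) z =
      dbar (fun z => deriv f z * (starRingEnd ℂ) z) z + dbar Q z := fun z hz => by
    have hzO := hO.mem_nhds (hΩO (subset_closure hz))
    have hzW := hW.mem_nhds (hΩW (subset_closure hz))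
    exact dbar_add ((hfconj.differentiableOn one_ne_zero).differentiableAt hzO)
      ((hQ.differentiableOn one_ne_zero).differentiableAt hzW)
  have hdbar : ∀ z ∈ Ω, dbar (fun z => deriv f z * (starRingEnd ℂ) z) z = deriv f z :=
    fun z hz => by
      rw [dbar_mul_of_differentiableAt
        (hf'.differentiableAt (hO.mem_nhds (hΩO (subset_closure hz))))
        (hconj.differentiable one_ne_zero z), dbar_conj, mul_one]
  rw [setIntegral_congr_fun hΩ.measurableSet hsplit, integral_add
    (integrableOn_dbar hb hO hΩO hfconj) (integrableOn_dbar hb hW hΩW hQ),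
    setIntegral_congr_fun hΩ.measurableSet hdbar] at hzero
  exact eq_neg_of_add_eq_zero_left hzero

theorem abelian_domain_quadrature_identity_general (hΩ : IsOpen Ω) (hb : IsBounded Ω)
    {ι : Type*} [Fintype ι] (a : ι → ℂ) (hV : IsOpen V) (hΩV : frontier Ω ⊆ V)
    (hS : DifferentiableOn ℂ S V) (hSval : ∀ z ∈ frontier Ω, S z = (starRingEnd ℂ) z)
    {s : ℂ → ℂ} (hs : DifferentiableOn ℂ s ((Ω \ Set.range a) ∪ V))
    (hsS' : ∀ z ∈ V, s z = deriv S z) (hO : IsOpen O) (hΩO : closure Ω ⊆ O)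
    (hf : DifferentiableOn ℂ f O) (R : ι → ℝ) (hR : ∀ j, 0 < R j)
    (hballs : ∀ j, Metric.closedBall (a j) (R j) ⊆ Ω)
    (hdisj : Pairwise (Function.onFun Disjoint fun j => Metric.closedBall (a j) (R j))) :
    (1 / (Real.pi : ℂ)) * (∫ ζ in Ω, deriv f ζ) =
      -∑ j, (1 / (2 * Real.pi * I)) * (∮ z in C(a j, R j), f z * s z) := by
  have hΩW : closure Ω ⊆ O ∩ (Ω ∪ V) := Set.subset_inter hΩO <| by
    rw [closure_eq_self_union_frontier]
    exact Set.union_subset_union_right Ω hΩV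
  have hfs : DifferentiableOn ℂ (fun z => f z * s z) ((O ∩ (Ω ∪ V)) \ Set.range a) :=
    (hf.mono fun z hz => hz.1.1).mul
      (hs.mono fun z hz => hz.1.2.imp_left fun hzΩ => ⟨hzΩ, hz.2⟩)
  have hfrontier : ∀ z ∈ frontier Ω,
      excise (fun z => f z * s z) a R z = f z * deriv S z := fun z hz => by
    rw [excise_eq_self hR fun j hzj => ?_, hsS' z (hΩV hz)]
    exact (hΩ.frontier_eq ▸ hz).2 (hballs j (Metric.ball_subset_closedBall hzj))
  rw [setIntegral_deriv_eq_neg_setIntegral_dbar hΩ hb hV hΩV hS hSval hO hΩO hf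
      (hO.inter (hΩ.union hV)) hΩW
      (contDiffOn_excise hR hdisj (hO.inter (hΩ.union hV)) hfs) hfrontier,
    setIntegral_dbar_excise hΩ hR hballs hdisj
      (hfs.mono (Set.sdiff_subset_sdiff_left (subset_closure.trans hΩW))),
    ← Finset.mul_sum]
  ring

end Quadrature

/-- If the derivative of the Schwarz function of `Γ` extends meromorphically
to `Ω` (an Abelian domain), then for every `f` holomorphic on a neighborhood of
`closure Ω`, `(1/π) ∫_Ω f' dA = −Σ_j (1/(2πi)) ∮_{|z−a_j|=ε} f(z) s(z) dz`. -/
theorem abelian_domain_quadrature_identity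
    (Ω : Set ℂ) (hΩopen : IsOpen Ω) (hΩbdd : Bornology.IsBounded Ω)
    (hΩconn : IsConnected Ω) (hΩsc : SimplyConnectedSpace Ω)
    (γ : ℝ → ℂ) (hγan : ∀ t, AnalyticAt ℝ γ t)
    (hγper : Function.Periodic γ (2 * Real.pi))
    (hγ' : ∀ t, deriv γ t ≠ 0)
    (hΓ : frontier Ω = Set.range γ)
    (hwind : ∀ z ∈ Ω,
      (1 / (2 * Real.pi * Complex.I)) *
        (∫ t in (0:ℝ)..(2 * Real.pi), deriv γ t / (γ t - z)) = 1)
    (n : ℕ) (a : Fin n → ℂ) (ha : ∀ j, a j ∈ Ω) (hainj : Function.Injective a)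
    (V : Set ℂ) (hV : IsOpen V) (hΓV : frontier Ω ⊆ V)
    (S : ℂ → ℂ) (hS : DifferentiableOn ℂ S V)
    (hSval : ∀ z ∈ frontier Ω, S z = (starRingEnd ℂ) z)
    (s : ℂ → ℂ) (hs : DifferentiableOn ℂ s ((Ω \ Set.range a) ∪ V))
    (hsS' : ∀ z ∈ V, s z = deriv S z)
    (O : Set ℂ) (hO : IsOpen O) (hΩO : closure Ω ⊆ O)
    (f : ℂ → ℂ) (hf : DifferentiableOn ℂ f O)
    (ε : ℝ) (hε : 0 < ε)
    (hballs : ∀ j, Metric.closedBall (a j) ε ⊆ Ω \ V)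
    (hdisj : ∀ j k, j ≠ k →
      Disjoint (Metric.closedBall (a j) ε) (Metric.closedBall (a k) ε)) :
    (1 / (Real.pi : ℂ)) * (∫ ζ in Ω, deriv f ζ) =
      -∑ j : Fin n, (1 / (2 * Real.pi * Complex.I)) *
        (∮ z in C(a j, ε), f z * s z) := by
  exact abelian_domain_quadrature_identity_general hΩopen hΩbdd a hV hΓV hS hSval hs hsS' hO hΩO hf
    (fun _ => ε) (fun _ => hε) (fun j => (hballs j).trans Set.sdiff_subset) fun j k => hdisj j k
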